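/- arXiv:2202.06711 — 2 statements merged into one kernel-verified Lean document; each statement's English description precedes it below -/
import Mathlib

section
/- Let 𝓔 be an abelian category, n ≥ 1, and M a full subcategory of 𝓔 closed under isomorphisms which is n-rigid, i.e., Ext^i(X,Y) = 0 for all X,Y ∈ M and 1 ≤ i ≤ n−1. Fix k ≥ 1 and i ∈ {1,…,n−1}, and suppose that Ext^j(X,Y) = 0 for all X,Y ∈ M and every j ∈ {1,…,kn+i−1} not divisible by n. Then for every X ∈ M and every complex Y⁰ → Y¹ → ⋯ → Yⁿ → Y^{n+1} in M such that 0 → Y⁰ → ⋯ → Y^{n+1} → 0 is exact in 𝓔, the induced sequence of abelian groups 0 → Hom(X,Y⁰) → ⋯ → Hom(X,Y^{n+1}) → Extⁿ(X,Y⁰) → ⋯ → Extⁿ(X,Y^{n+1}) → ⋯ → Ext^{kn}(X,Y⁰) → ⋯ → Ext^{kn}(X,Y^{i−1}) → Ext^{kn}(X,Y^{i}) is exact at every interior spot, where within each row the maps are induced by the differentials and each connecting map Ext^{mn}(X,Y^{n+1}) → Ext^{(m+1)n}(X,Y⁰) is Yoneda composition with the class [Y] ∈ Extⁿ(Y^{n+1},Y⁰)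 of the exact sequence 0 → Y⁰ → ⋯ → Y^{n+1} → 0. -/
open CategoryTheory CategoryTheory.Abelian CategoryTheory.Limits

universe w v u

namespace NZPaper

variable {C : Type u} [Category.{v} C] [Abelian C] [HasExt.{w} C]

/-- A full (iso-closed) subcategory, encoded as a set of objects, is `n`-cluster tilting if it
admits monic left approximations and epic right approximations and is characterized by the
vanishing of `Ext^i` for `1 ≤ i ≤ n-1` on either side. -/
def IsNClusterTilting (n : ℕ) (M : Set C) : Prop :=
  (∀ ⦃X Y : C⦄, (X ≅ Y) → X ∈ M → Y ∈ M) ∧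
  (∀ E : C, ∃ (X : C) (f : E ⟶ X), X ∈ M ∧ Mono f ∧
      ∀ X' ∈ M, ∀ g : E ⟶ X', ∃ h : X ⟶ X', f ≫ h = g) ∧
  (∀ E : C, ∃ (X : C) (f : X ⟶ E), X ∈ M ∧ Epi f ∧
      ∀ X' ∈ M, ∀ g : X' ⟶ E, ∃ h : X' ⟶ X, h ≫ f = g) ∧
  (∀ E : C, E ∈ M ↔ ∀ Y ∈ M, ∀ i : ℕ, 1 ≤ i → i < n → ∀ e : Ext E Y i, e = 0) ∧
  (∀ E : C, E ∈ M ↔ ∀ Y ∈ M, ∀ i : ℕ, 1 ≤ i → i < n → ∀ e : Ext Y E i, e = 0)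

/-- An `nℤ`-cluster tilting subcategory: in addition `Ext^k` vanishes on `M` for every
`k ≥ 1` not divisible by `n`. -/
def IsNZClusterTilting (n : ℕ) (M : Set C) : Prop :=
  IsNClusterTilting n M ∧
  ∀ X ∈ M, ∀ Y ∈ M, ∀ k : ℕ, 1 ≤ k → ¬ (n ∣ k) → ∀ e : Ext X Y k, e = 0

/-- An exact sequence `0 → Y 0 → Y 1 → ⋯ → Y m → Y (m+1) → 0` in an abelian category,
recorded together with its canonical splicing into short exact sequences
`0 → K i → Y (i+1) → K (i+1) → 0` (`K i` is the image of `d i` for `1 ≤ i ≤ m`,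
`K 0 = Y 0` and `K m = Y (m+1)`).  Only the indices `0, …, m+1` (resp. `0, …, m`) of
`Y` (resp. of the differentials and of `K`) are relevant; the remaining values are junk
(any such exact sequence can be padded by zero objects). -/
structure ExactExtension (C : Type u) [Category.{v} C] [Abelian C] (m : ℕ) where
  Y : ℕ → C
  d : ∀ i, Y i ⟶ Y (i + 1)
  K : ℕ → C
  ι : ∀ i, K i ⟶ Y (i + 1)
  π : ∀ i, Y i ⟶ K i
  hK0 : K 0 = Y 0
  hKm : K m = Y (m + 1)
  zero : ∀ i, ι i ≫ π (i + 1) = 0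
  shortExact : ∀ i, (ShortComplex.mk (ι i) (π (i + 1)) (zero i)).ShortExact
  d0_eq : eqToHom hK0 ≫ d 0 = ι 0
  dmid_eq : ∀ i, 1 ≤ i → i + 1 ≤ m → d i = π i ≫ ι i
  dlast_eq : d m = π m ≫ eqToHom hKm

/-- The Yoneda class of the chain of the first `j` short exact sequences,
obtained as the Yoneda composite of their `Ext¹`-classes. -/
noncomputable def ExactExtension.chainClass {m : ℕ} (T : ExactExtension C m) :
    ∀ j : ℕ, Ext (T.K j) (T.K 0) j
  | 0 => Ext.mk₀ (𝟙 _)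
  | (j + 1) => ((T.shortExact j).extClass).comp (T.chainClass j) (by omega)

/-- The Yoneda class `[ξ] ∈ Ext^m (Y (m+1)) (Y 0)` of the exact sequence
`0 → Y 0 → ⋯ → Y (m+1) → 0`, i.e. the Yoneda composite of the `Ext¹`-classes of the
short exact sequences obtained by splicing it at its images. -/
noncomputable def ExactExtension.extClass {m : ℕ} (T : ExactExtension C m) :
    Ext (T.Y (m + 1)) (T.Y 0) m :=
  (Ext.mk₀ (eqToHom T.hKm.symm)).comp
    ((T.chainClass m).comp (Ext.mk₀ (eqToHom T.hK0)) (add_zero m)) (zero_add m)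

/-- Transport of an `Ext`-class along equalities of objects. -/
noncomputable def extTransport {X X' Z Z' : C} {a : ℕ} (e : Ext X Z a)
    (hX : X = X') (hZ : Z = Z') : Ext X' Z' a :=
  (Ext.mk₀ (eqToHom hX.symm)).comp (e.comp (Ext.mk₀ (eqToHom hZ)) (add_zero a)) (zero_add a)

/-- Exactness, at every spot, of the long sequence of abelian groups
`0 → Hom(X,Y⁰) → ⋯ → Hom(X,Y^{n+1}) → Extⁿ(X,Y⁰) → ⋯ → Extⁿ(X,Y^{n+1}) → Ext^{2n}(X,Y⁰) → ⋯`
(`Ext⁰ = Hom`), where within each row the maps are induced by the differentials of `T` and each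
connecting map `Ext^{kn}(X,Y^{n+1}) → Ext^{(k+1)n}(X,Y⁰)` is Yoneda composition with the class
`[T] ∈ Extⁿ(Y^{n+1},Y⁰)`. -/
def CovLES (n : ℕ) (X : C) (T : ExactExtension C n) : Prop :=
  (Function.Injective fun e : Ext X (T.Y 0) 0 => e.comp (Ext.mk₀ (T.d 0)) (add_zero 0)) ∧
  (∀ k i : ℕ, i < n → Function.Exact
      (fun e : Ext X (T.Y i) (k * n) => e.comp (Ext.mk₀ (T.d i)) (add_zero _))
      (fun e : Ext X (T.Y (i + 1)) (k * n) => e.comp (Ext.mk₀ (T.d (i + 1))) (add_zero _))) ∧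
  (∀ k : ℕ, Function.Exact
      (fun e : Ext X (T.Y n) (k * n) => e.comp (Ext.mk₀ (T.d n)) (add_zero _))
      (fun e : Ext X (T.Y (n + 1)) (k * n) =>
        e.comp T.extClass (show k * n + n = (k + 1) * n by ring))) ∧
  (∀ k : ℕ, Function.Exact
      (fun e : Ext X (T.Y (n + 1)) (k * n) =>
        e.comp T.extClass (show k * n + n = (k + 1) * n by ring))
      (fun e : Ext X (T.Y 0) ((k + 1) * n) => e.comp (Ext.mk₀ (T.d 0)) (add_zero _)))

/-- Exactness, at every spot, of the long sequence of abelian groups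
`0 → Hom(Y^{n+1},Z) → ⋯ → Hom(Y⁰,Z) → Extⁿ(Y^{n+1},Z) → ⋯ → Extⁿ(Y⁰,Z) → Ext^{2n}(Y^{n+1},Z) → ⋯`
(`Ext⁰ = Hom`), where within each row the maps are induced by the differentials of `T` and each
connecting map `Ext^{kn}(Y⁰,Z) → Ext^{(k+1)n}(Y^{n+1},Z)` is Yoneda precomposition with the class
`[T] ∈ Extⁿ(Y^{n+1},Y⁰)`. -/
def ContraLES (n : ℕ) (Z : C) (T : ExactExtension C n) : Prop :=
  (Function.Injective fun e : Ext (T.Y (n + 1)) Z 0 => (Ext.mk₀ (T.d n)).comp e (zero_add 0)) ∧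
  (∀ k i : ℕ, i < n → Function.Exact
      (fun e : Ext (T.Y (i + 2)) Z (k * n) => (Ext.mk₀ (T.d (i + 1))).comp e (zero_add _))
      (fun e : Ext (T.Y (i + 1)) Z (k * n) => (Ext.mk₀ (T.d i)).comp e (zero_add _))) ∧
  (∀ k : ℕ, Function.Exact
      (fun e : Ext (T.Y 1) Z (k * n) => (Ext.mk₀ (T.d 0)).comp e (zero_add _))
      (fun e : Ext (T.Y 0) Z (k * n) =>
        T.extClass.comp e (show n + k * n = (k + 1) * n by ring))) ∧
  (∀ k : ℕ, Function.Exact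
      (fun e : Ext (T.Y 0) Z (k * n) =>
        T.extClass.comp e (show n + k * n = (k + 1) * n by ring))
      (fun e : Ext (T.Y (n + 1)) Z ((k + 1) * n) => (Ext.mk₀ (T.d n)).comp e (zero_add _)))

end NZPaper

namespace NZPaper

section Helpers

variable {C : Type u} [Category.{v} C] [Abelian C] [HasExt.{w} C] {n : ℕ}

theorem aux_cancel {X A B : C} {a : ℕ} (h : A = B) (e : Ext X A a)
    (he : e.comp (Ext.mk₀ (eqToHom h)) (add_zero a) = 0) : e = 0 := by
  subst h; simpa using he

theorem aux_ex1 (T : ExactExtension C n) (X : C) (t : ℕ) {a b : ℕ} (hab : a + 1 = b)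
    (x : Ext X (T.K t) b) (hx : x.comp (Ext.mk₀ (T.ι t)) (add_zero b) = 0) :
    ∃ y : Ext X (T.K (t + 1)) a, y.comp (T.shortExact t).extClass hab = x :=
  Ext.covariant_sequence_exact₁ X (T.shortExact t) x hx hab

theorem aux_ex2 (T : ExactExtension C n) (X : C) (t : ℕ) {a : ℕ}
    (x : Ext X (T.Y (t + 1)) a) (hx : x.comp (Ext.mk₀ (T.π (t + 1))) (add_zero a) = 0) :
    ∃ y : Ext X (T.K t) a, y.comp (Ext.mk₀ (T.ι t)) (add_zero a) = x :=
  Ext.covariant_sequence_exact₂ X (T.shortExact t) x hx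

theorem aux_ex3 (T : ExactExtension C n) (X : C) (t : ℕ) {a b : ℕ} (hab : a + 1 = b)
    (x : Ext X (T.K (t + 1)) a) (hx : x.comp (T.shortExact t).extClass hab = 0) :
    ∃ y : Ext X (T.Y (t + 1)) a, y.comp (Ext.mk₀ (T.π (t + 1))) (add_zero a) = x :=
  Ext.covariant_sequence_exact₃ X (T.shortExact t) x hab hx

theorem aux_pi_ext (T : ExactExtension C n) (t : ℕ) :
    (Ext.mk₀ (T.π (t + 1))).comp (T.shortExact t).extClass (zero_add 1) = 0 :=
  (T.shortExact t).comp_extClass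

theorem aux_ext_iota (T : ExactExtension C n) (t : ℕ) :
    (T.shortExact t).extClass.comp (Ext.mk₀ (T.ι t)) (add_zero 1) = 0 :=
  (T.shortExact t).extClass_comp

/-- Vanishing of `Ext^a(X, K t)` from the left. -/
theorem aux_vanL (T : ExactExtension C n) (X : C) : ∀ (t a : ℕ),
    (∀ s c : ℕ, s ≤ t → c + s = a + t → ∀ e : Ext X (T.Y s) c, e = 0) →
    ∀ e : Ext X (T.K t) a, e = 0
  | 0, a, H, e => aux_cancel T.hK0 e (H 0 a le_rfl rfl _)
  | t + 1, a, H, e => by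
      have h0 : e.comp (T.shortExact t).extClass rfl = 0 :=
        aux_vanL T X t (a + 1) (fun s c hs hc => H s c (by omega) (by omega)) _
      obtain ⟨y, rfl⟩ := aux_ex3 T X t rfl e h0
      rw [H (t + 1) a le_rfl rfl y, Ext.zero_comp]

/-- Vanishing of `Ext^a(X, K t)` from the right. -/
theorem aux_vanR (T : ExactExtension C n) (X : C) : ∀ (r t a : ℕ), t + r = n → r ≤ a →
    (∀ s c : ℕ, t + 1 ≤ s → s ≤ n + 1 → c + s = a + t + 1 → ∀ e : Ext X (T.Y s) c, e = 0) →
    ∀ e : Ext X (T.K t) a, e = 0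
  | 0, t, a, ht, _, H, e => by
      obtain rfl : t = n := by omega
      exact aux_cancel T.hKm e (H (t + 1) a le_rfl le_rfl (by omega) _)
  | r + 1, t, a, ht, ha, H, e => by
      obtain ⟨a, rfl⟩ : ∃ a', a = a' + 1 := ⟨a - 1, by omega⟩
      obtain ⟨y, rfl⟩ := aux_ex1 T X t rfl e
        (H (t + 1) (a + 1) le_rfl (by omega) (by omega) _)
      rw [aux_vanR T X r (t + 1) a (by omega) (by omega)
        (fun s c h1 h2 h3 => H s c (by omega) h2 (by omega)) y, Ext.zero_comp]

theorem aux_chain_inj (T : ExactExtension C n) (X : C) : ∀ (j a b : ℕ) (hb : a + j = b),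
    (∀ t c : ℕ, 1 ≤ t → t ≤ j → c + t = a + j → ∀ f : Ext X (T.Y t) c, f = 0) →
    ∀ e : Ext X (T.K j) a, e.comp (T.chainClass j) hb = 0 → e = 0
  | 0, a, b, hb, H, e, he => by
      obtain rfl : a = b := by omega
      simpa [ExactExtension.chainClass] using he
  | j + 1, a, b, hb, H, e, he => by
      have h1 : (e.comp (T.shortExact j).extClass rfl).comp (T.chainClass j)
          (show a + 1 + j = b by omega) = 0 := by
        rw [Ext.comp_assoc _ _ _ rfl (show 1 + j = j + 1 by omega) (by omega)]
        exact he
      have h2 := aux_chain_inj T X j (a + 1) b (by omega)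
        (fun t c h1 h2 h3 => H t c h1 (by omega) (by omega)) _ h1
      obtain ⟨y, rfl⟩ := aux_ex3 T X j rfl e h2
      rw [H (j + 1) a (by omega) le_rfl rfl y, Ext.zero_comp]

theorem aux_chain_surj (T : ExactExtension C n) (X : C) : ∀ (j a b : ℕ) (hb : a + j = b),
    (∀ t c : ℕ, 2 ≤ t → t ≤ j → c + t = a + j + 1 → ∀ f : Ext X (T.Y t) c, f = 0) →
    ∀ f : Ext X (T.K 0) b, f.comp (Ext.mk₀ (T.ι 0)) (add_zero b) = 0 →
      ∃ e : Ext X (T.K j) a, e.comp (T.chainClass j) hb = f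
  | 0, a, b, hb, H, f, hf => by
      obtain rfl : a = b := by omega
      exact ⟨f, by simp [ExactExtension.chainClass]⟩
  | j + 1, a, b, hb, H, f, hf => by
      obtain ⟨e, he⟩ := aux_chain_surj T X j (a + 1) b (by omega)
        (fun t c h1 h2 h3 => H t c h1 (by omega) (by omega)) f hf
      have h0 : e.comp (Ext.mk₀ (T.ι j)) (add_zero _) = 0 := by
        rcases Nat.eq_zero_or_pos j with rfl | hj
        · obtain rfl : a + 1 = b := by omega
          have : e = f := by simpa [ExactExtension.chainClass] using he
          rw [this]; exact hf
        · exact H (j + 1) (a + 1) (by omega) le_rfl (by omega) _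
      obtain ⟨y, hy⟩ := aux_ex1 T X j rfl e h0
      refine ⟨y, ?_⟩
      rw [← he, ← hy, Ext.comp_assoc _ _ _ rfl (show 1 + j = j + 1 by omega) (by omega)]
      rfl

theorem aux_chain_iota (T : ExactExtension C n) : ∀ j : ℕ,
    (T.chainClass (j + 1)).comp (Ext.mk₀ (T.ι 0)) (add_zero _) = 0
  | 0 => by
      have h := aux_ext_iota T 0
      simpa [ExactExtension.chainClass] using h
  | j + 1 => by
      rw [ExactExtension.chainClass, Ext.comp_assoc_of_third_deg_zero, aux_chain_iota T j,
        Ext.comp_zero]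

theorem aux_pi_chain (T : ExactExtension C n) (j : ℕ) :
    (Ext.mk₀ (T.π (j + 1))).comp (T.chainClass (j + 1)) (zero_add _) = 0 := by
  rw [ExactExtension.chainClass,
    ← Ext.comp_assoc _ _ _ (zero_add 1) (show 1 + j = j + 1 by omega) (by omega),
    aux_pi_ext, Ext.zero_comp]

theorem aux_mid (T : ExactExtension C n) (X : C) (t b : ℕ) (ht : t < n)
    (Hinj : t + 1 < n → ∀ x : Ext X (T.K (t + 1)) b,
      x.comp (Ext.mk₀ (T.ι (t + 1))) (add_zero b) = 0 → x = 0)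
    (Hsurj : 1 ≤ t → ∀ x : Ext X (T.K t) b,
      ∃ y : Ext X (T.Y t) b, y.comp (Ext.mk₀ (T.π t)) (add_zero b) = x) :
    Function.Exact
        (fun e : Ext X (T.Y t) b => e.comp (Ext.mk₀ (T.d t)) (add_zero _))
        (fun e : Ext X (T.Y (t + 1)) b => e.comp (Ext.mk₀ (T.d (t + 1))) (add_zero _)) := by
  -- factor the first differential through `ι t`
  obtain ⟨p, hp, hps⟩ : ∃ p : T.Y t ⟶ T.K t, T.d t = p ≫ T.ι t ∧
      ∀ x : Ext X (T.K t) b, ∃ y : Ext X (T.Y t) b,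
        y.comp (Ext.mk₀ p) (add_zero b) = x := by
    rcases Nat.eq_zero_or_pos t with rfl | h
    · refine ⟨eqToHom T.hK0.symm, by rw [← T.d0_eq]; simp, fun x =>
        ⟨x.comp (Ext.mk₀ (eqToHom T.hK0)) (add_zero b), by simp⟩⟩
    · exact ⟨T.π t, T.dmid_eq t h ht, Hsurj h⟩
  -- factor the second differential through `π (t+1)`
  obtain ⟨q, hq, hqi⟩ : ∃ q : T.K (t + 1) ⟶ T.Y (t + 1 + 1), T.d (t + 1) = T.π (t + 1) ≫ q ∧
      ∀ x : Ext X (T.K (t + 1)) b, x.comp (Ext.mk₀ q) (add_zero b) = 0 → x = 0 := by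
    by_cases h : t + 1 < n
    · exact ⟨T.ι (t + 1), T.dmid_eq (t + 1) (by omega) h, Hinj h⟩
    · obtain rfl : n = t + 1 := by omega
      exact ⟨eqToHom T.hKm, T.dlast_eq, fun x => aux_cancel T.hKm x⟩
  intro e
  constructor
  · intro he
    dsimp only at he
    rw [hq, ← Ext.mk₀_comp_mk₀, ← Ext.comp_assoc_of_second_deg_zero] at he
    obtain ⟨y, hy⟩ := aux_ex2 T X t e (hqi _ he)
    obtain ⟨z, hz⟩ := hps y
    refine ⟨z, ?_⟩
    dsimp only
    rw [hp, ← Ext.mk₀_comp_mk₀, ← Ext.comp_assoc_of_second_deg_zero, hz, hy]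
  · rintro ⟨y, rfl⟩
    dsimp only
    rw [Ext.comp_assoc_of_second_deg_zero, Ext.mk₀_comp_mk₀, hp, hq, Category.assoc,
      reassoc_of% (T.zero t), zero_comp, comp_zero, Ext.mk₀_zero, Ext.comp_zero]

theorem aux_comp_extClass (T : ExactExtension C n) (X : C) {a b : ℕ} (h : a + n = b)
    (e : Ext X (T.Y (n + 1)) a) :
    e.comp T.extClass h =
      ((e.comp (Ext.mk₀ (eqToHom T.hKm.symm)) (add_zero a)).comp (T.chainClass n) h).comp
        (Ext.mk₀ (eqToHom T.hK0)) (add_zero b) := by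
  rw [ExactExtension.extClass, ← Ext.comp_assoc_of_second_deg_zero,
    Ext.comp_assoc_of_third_deg_zero]

end Helpers

/-- Let `𝓔` be an abelian category, `n ≥ 1`, and `M` an `n`-rigid full
subcategory (closed under isomorphisms) of `𝓔`.  Fix `k ≥ 1` and `i ∈ {1,…,n-1}` and suppose
`Ext^j(X,Y) = 0` for all `X, Y ∈ M` and every `j ∈ {1,…,kn+i-1}` not divisible by `n`.  Then
for every `X ∈ M` and every `n`-exact sequence `T` with terms in `M` the truncated long sequence
`0 → Hom(X,Y⁰) → ⋯ → Ext^{kn}(X,Y^{i-1}) → Ext^{kn}(X,Y^i)` (with maps induced by the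
differentials and connecting maps given by Yoneda composition with `[T]`) is exact at every
interior spot. -/
theorem rigid_truncated_covariant_les
    {C : Type u} [Category.{v} C] [Abelian C] [HasExt.{w} C]
    (n : ℕ) (hn : 1 ≤ n) (M : Set C)
    (hiso : ∀ ⦃X Y : C⦄, (X ≅ Y) → X ∈ M → Y ∈ M)
    (hrigid : ∀ X ∈ M, ∀ Y ∈ M, ∀ j : ℕ, 1 ≤ j → j < n → ∀ e : Ext X Y j, e = 0)
    (k : ℕ) (hk : 1 ≤ k) (i : ℕ) (hi1 : 1 ≤ i) (hi2 : i ≤ n - 1)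
    (hvan : ∀ X ∈ M, ∀ Y ∈ M, ∀ j : ℕ, 1 ≤ j → j ≤ k * n + i - 1 → ¬ (n ∣ j) →
      ∀ e : Ext X Y j, e = 0)
    (X : C) (hX : X ∈ M)
    (T : ExactExtension C n) (hT : ∀ t ≤ n + 1, T.Y t ∈ M) :
    -- exactness (= injectivity) at `Hom(X,Y⁰)`
    (Function.Injective fun e : Ext X (T.Y 0) 0 => e.comp (Ext.mk₀ (T.d 0)) (add_zero 0)) ∧
    -- exactness at `Ext^{mn}(X,Y^{t+1})` for `m < k`, `t + 1 ≤ n`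
    (∀ m < k, ∀ t < n, Function.Exact
        (fun e : Ext X (T.Y t) (m * n) => e.comp (Ext.mk₀ (T.d t)) (add_zero _))
        (fun e : Ext X (T.Y (t + 1)) (m * n) => e.comp (Ext.mk₀ (T.d (t + 1))) (add_zero _))) ∧
    -- exactness at `Ext^{kn}(X,Y^{t+1})` for `t + 1 ≤ i - 1`
    (∀ t : ℕ, t + 2 ≤ i → Function.Exact
        (fun e : Ext X (T.Y t) (k * n) => e.comp (Ext.mk₀ (T.d t)) (add_zero _))
        (fun e : Ext X (T.Y (t + 1)) (k * n) => e.comp (Ext.mk₀ (T.d (t + 1))) (add_zero _))) ∧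
    -- exactness at `Ext^{mn}(X,Y^{n+1})` for `m < k`
    (∀ m < k, Function.Exact
        (fun e : Ext X (T.Y n) (m * n) => e.comp (Ext.mk₀ (T.d n)) (add_zero _))
        (fun e : Ext X (T.Y (n + 1)) (m * n) =>
          e.comp T.extClass (show m * n + n = (m + 1) * n by ring))) ∧
    -- exactness at `Ext^{(m+1)n}(X,Y⁰)` for `m + 1 ≤ k`
    (∀ m < k, Function.Exact
        (fun e : Ext X (T.Y (n + 1)) (m * n) =>
          e.comp T.extClass (show m * n + n = (m + 1) * n by ring))
        (fun e : Ext X (T.Y 0) ((m + 1) * n) => e.comp (Ext.mk₀ (T.d 0)) (add_zero _))) := by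
  have hn2 : 2 ≤ n := by omega
  have ndvd : ∀ m r : ℕ, 1 ≤ r → r < n → ¬ (n ∣ m * n + r) := by
    intro m r h1 h2 h
    have h3 : n ∣ r := (Nat.dvd_add_right (Dvd.intro_left m rfl)).1 h
    exact absurd (Nat.le_of_dvd h1 h3) (by omega)
  have mle : ∀ m, m < k → m * n + n ≤ k * n := by
    intro m hm
    calc m * n + n = (m + 1) * n := by ring
      _ ≤ k * n := Nat.mul_le_mul_right n hm
  -- vanishing, in convenient form
  have V : ∀ m r s c : ℕ, 1 ≤ r → r < n → m * n + r ≤ k * n + i - 1 → c = m * n + r →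
      s ≤ n + 1 → ∀ e : Ext X (T.Y s) c, e = 0 := by
    intro m r s c h1 h2 h3 h4 h5
    subst h4
    exact hvan X hX _ (hT s h5) _ (by omega) h3 (ndvd m r h1 h2)
  have Hinj : ∀ m ≤ k, ∀ t, t + 1 < n → ∀ x : Ext X (T.K (t + 1)) (m * n),
      x.comp (Ext.mk₀ (T.ι (t + 1))) (add_zero _) = 0 → x = 0 := by
    intro m hm t ht x hx
    rcases Nat.eq_zero_or_pos m with rfl | hm0
    · generalize h0 : 0 * n = z at x hx
      obtain rfl : z = 0 := by omega
      have : Mono (T.ι (t + 1)) := (T.shortExact (t + 1)).mono_f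
      exact Ext.postcomp_mk₀_injective_of_mono X (T.ι (t + 1)) (by simpa using hx)
    · obtain ⟨m, rfl⟩ : ∃ m', m = m' + 1 := ⟨m - 1, by omega⟩
      have e1 : (m + 1) * n = m * n + n := by ring
      have e2 := mle m (by omega)
      obtain ⟨y, rfl⟩ := aux_ex1 T X (t + 1) (show m * n + n - 1 + 1 = (m + 1) * n by omega) x hx
      rw [aux_vanR T X (n - (t + 2)) (t + 1 + 1) (m * n + n - 1) (by omega) (by omega)
        (fun s c h1 h2 h3 => V m (n + t + 2 - s) s c (by omega) (by omega) (by omega) (by omega)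
          h2) y, Ext.zero_comp]
  have Hsurj : ∀ m t, t < n → m * n + t ≤ k * n + i - 1 → 1 ≤ t → ∀ x : Ext X (T.K t) (m * n),
      ∃ y : Ext X (T.Y t) (m * n), y.comp (Ext.mk₀ (T.π t)) (add_zero _) = x := by
    intro m t ht hle h1 x
    obtain ⟨t, rfl⟩ : ∃ t', t = t' + 1 := ⟨t - 1, by omega⟩
    refine aux_ex3 T X t rfl x (aux_vanL T X t (m * n + 1) (fun s c h1 h2 => ?_) _)
    exact V m (t + 1 - s) s c (by omega) (by omega) (by omega) (by omega) (by omega)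
  have hmn : ∀ m, m < k → ∀ r, r < n → m * n + r ≤ k * n + i - 1 := by
    intro m hm r hr
    have := mle m hm
    omega
  refine ⟨?_, ?_, ?_, ?_, ?_⟩
  · have hm : Mono (T.d 0) := by
      have : Mono (T.ι 0) := (T.shortExact 0).mono_f
      have h : T.d 0 = eqToHom T.hK0.symm ≫ T.ι 0 := by rw [← T.d0_eq]; simp
      rw [h]; infer_instance
    exact Ext.postcomp_mk₀_injective_of_mono X (T.d 0)
  · intro m hm t ht
    exact aux_mid T X t _ ht (Hinj m hm.le t) (Hsurj m t ht (hmn m hm t ht))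
  · intro t ht
    exact aux_mid T X t _ (by omega) (Hinj k le_rfl t) (Hsurj k t (by omega) (by omega))
  · intro m hm e
    obtain ⟨p, rfl⟩ : ∃ p, n = p + 1 := ⟨n - 1, by omega⟩
    constructor
    · intro he
      dsimp only at he
      rw [aux_comp_extClass] at he
      have h1 := aux_cancel _ _ he
      set x := e.comp (Ext.mk₀ (eqToHom T.hKm.symm)) (add_zero _) with hx
      have h2 : (x.comp (T.shortExact p).extClass rfl).comp (T.chainClass p)
          (show m * (p + 1) + 1 + p = (m + 1) * (p + 1) by ring) = 0 := by
        rw [Ext.comp_assoc _ _ _ rfl (show 1 + p = p + 1 by omega) (by ring)]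
        exact h1
      have h3 := aux_chain_inj T X p _ _ _ (fun t c h1 h2 h3 =>
        V m (p + 1 - t) t c (by omega) (by omega) (hmn m hm _ (by omega)) (by omega)
          (by omega)) _ h2
      obtain ⟨y, hy⟩ := aux_ex3 T X p rfl x h3
      refine ⟨y, ?_⟩
      dsimp only
      rw [T.dlast_eq, ← Ext.mk₀_comp_mk₀, ← Ext.comp_assoc_of_second_deg_zero, hy, hx]
      simp
    · rintro ⟨y, rfl⟩
      dsimp only
      have h0 : (y.comp (Ext.mk₀ (T.d (p + 1))) (add_zero _)).comp
          (Ext.mk₀ (eqToHom T.hKm.symm)) (add_zero _) =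
          y.comp (Ext.mk₀ (T.π (p + 1))) (add_zero _) := by
        rw [T.dlast_eq]; simp
      rw [aux_comp_extClass, h0, Ext.comp_assoc_of_second_deg_zero, aux_pi_chain]
      simp
  · intro m hm f
    have hd : T.d 0 = eqToHom T.hK0.symm ≫ T.ι 0 := by rw [← T.d0_eq]; simp
    constructor
    · intro hf
      dsimp only at hf
      rw [hd, ← Ext.mk₀_comp_mk₀, ← Ext.comp_assoc_of_second_deg_zero] at hf
      obtain ⟨e, he⟩ := aux_chain_surj T X n (m * n) ((m + 1) * n) (by ring)
        (fun t c h1 h2 h3 => V m (n + 1 - t) t c (by omega) (by omega) (hmn m hm _ (by omega))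
          (by omega) (by omega)) _ hf
      refine ⟨e.comp (Ext.mk₀ (eqToHom T.hKm)) (add_zero _), ?_⟩
      have h0 : (e.comp (Ext.mk₀ (eqToHom T.hKm)) (add_zero _)).comp
          (Ext.mk₀ (eqToHom T.hKm.symm)) (add_zero _) = e := by simp
      dsimp only
      rw [aux_comp_extClass, h0, he]
      simp
    · rintro ⟨y, rfl⟩
      obtain ⟨p, rfl⟩ : ∃ p, n = p + 1 := ⟨n - 1, by omega⟩
      dsimp only
      rw [aux_comp_extClass, Ext.comp_assoc_of_second_deg_zero, Ext.mk₀_comp_mk₀, T.d0_eq,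
        Ext.comp_assoc_of_third_deg_zero, aux_chain_iota, Ext.comp_zero]

end NZPaper
end

section
/- Let 𝓔 be an abelian category, n ≥ 1, M an nℤ-cluster tilting subcategory of 𝓔, X ∈ M, and Y : 0 → Y⁰ → Y¹ → ⋯ → Yⁿ → Y^{n+1} → 0 an n-exact sequence in M. Then for every k ≥ 1 the four-term sequence of abelian groups Ext^{(k−1)n}(X,Yⁿ) → Ext^{(k−1)n}(X,Y^{n+1}) → Ext^{kn}(X,Y⁰) → Ext^{kn}(X,Y¹) is exact at its two middle terms, where the outer maps are induced by the differentials Yⁿ → Y^{n+1} and Y⁰ → Y¹ and the middle map is Yoneda composition with the class [Y] ∈ Extⁿ(Y^{n+1},Y⁰) (here Ext⁰ = Hom). -/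
open CategoryTheory CategoryTheory.Abelian CategoryTheory.Limits

universe w v u

namespace NZPaper

section helpers
variable {C : Type u} [Category.{v} C] [Abelian C] [HasExt.{w} C]

lemma chain_inj {m : ℕ} (T : ExactExtension C m) (X : C) (s : ℕ) (j : ℕ)
    (hv : ∀ i, 1 ≤ i → i ≤ j → ∀ b, b + i = s → ∀ e : Ext X (T.Y i) b, e = 0)
    (b : ℕ) (hb : b + j = s) (e : Ext X (T.K j) b) (he : e.comp (T.chainClass j) hb = 0) :
    e = 0 := by
  induction j generalizing b with
  | zero =>
    obtain rfl : b = s := by omega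
    simpa [ExactExtension.chainClass] using he
  | succ j ih =>
    have h1 : e.comp (T.shortExact j).extClass (rfl : b + 1 = b + 1) = 0 := by
      refine ih (fun i h1 h2 => hv i h1 (by omega)) (b + 1) (by omega) _ ?_
      rw [Ext.comp_assoc _ _ _ rfl (by omega : 1 + j = j + 1) (by omega)]
      exact he
    obtain ⟨y, rfl⟩ := Ext.covariant_sequence_exact₃ X (T.shortExact j) e rfl h1
    rw [hv (j + 1) (by omega) le_rfl b hb y]
    simp

lemma chain_lift {m : ℕ} (T : ExactExtension C m) (X : C) (s : ℕ) (j : ℕ)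
    (hv : ∀ i, 1 ≤ i → i ≤ j → ∀ b, b + i = s → ∀ e : Ext X (T.Y (i + 1)) b, e = 0)
    (f : Ext X (T.K 0) s) (hf : f.comp (Ext.mk₀ (T.ι 0)) (add_zero s) = 0)
    (b : ℕ) (hb : b + (j + 1) = s) :
    ∃ e : Ext X (T.K (j + 1)) b, e.comp (T.chainClass (j + 1)) hb = f := by
  induction j generalizing b with
  | zero =>
    obtain ⟨e, he⟩ := Ext.covariant_sequence_exact₁ X (T.shortExact 0) f hf hb
    refine ⟨e, ?_⟩
    simpa [ExactExtension.chainClass] using he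
  | succ j ih =>
    obtain ⟨e, he⟩ := ih (fun i h1 h2 => hv i h1 (by omega)) (b + 1) (by omega)
    obtain ⟨e', rfl⟩ := Ext.covariant_sequence_exact₁ X (T.shortExact (j + 1)) e
      (hv (j + 1) (by omega) le_rfl (b + 1) (by omega) _) rfl
    refine ⟨e', ?_⟩
    rw [← he, Ext.comp_assoc _ _ _ rfl (by omega : 1 + (j + 1) = j + 1 + 1) (by omega)]
    rfl

lemma chain_comp_ι {m : ℕ} (T : ExactExtension C m) (j : ℕ) :
    (T.chainClass (j + 1)).comp (Ext.mk₀ (T.ι 0)) (add_zero _) = 0 := by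
  induction j with
  | zero =>
    simpa [ExactExtension.chainClass] using (T.shortExact 0).extClass_comp
  | succ j ih =>
    rw [ExactExtension.chainClass, Ext.comp_assoc_of_third_deg_zero, ih]
    simp

lemma π_comp_chain {m : ℕ} (T : ExactExtension C m) (j : ℕ) :
    (Ext.mk₀ (T.π (j + 1))).comp (T.chainClass (j + 1)) (zero_add _) = 0 := by
  rw [ExactExtension.chainClass]
  exact (T.shortExact j).comp_extClass_assoc _ _

lemma comp_extClass_eq {m : ℕ} (T : ExactExtension C m) {X : C} {a s : ℕ} (h : a + m = s)
    (e : Ext X (T.Y (m + 1)) a) :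
    e.comp T.extClass h =
      ((e.comp (Ext.mk₀ (eqToHom T.hKm.symm)) (add_zero a)).comp (T.chainClass m) h).comp
        (Ext.mk₀ (eqToHom T.hK0)) (add_zero s) := by
  rw [ExactExtension.extClass, Ext.comp_assoc_of_third_deg_zero,
    Ext.comp_assoc_of_second_deg_zero]

lemma comp_eqToHom_cancel {X A B : C} {a : ℕ} (h : A = B) (h' : B = A) (e : Ext X A a) :
    (e.comp (Ext.mk₀ (eqToHom h)) (add_zero a)).comp (Ext.mk₀ (eqToHom h')) (add_zero a) = e := by
  subst h
  simp

end helpers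

/-- Let `𝓔` be an abelian category, `n ≥ 1`, `M` an `nℤ`-cluster tilting
subcategory of `𝓔`, `X ∈ M`, and `T` an `n`-exact sequence in `M`.  Then for every `k ≥ 1`
(written `k + 1` below) the four-term sequence
`Ext^{kn}(X,Yⁿ) → Ext^{kn}(X,Y^{n+1}) → Ext^{(k+1)n}(X,Y⁰) → Ext^{(k+1)n}(X,Y¹)` is exact at
its two middle terms, the outer maps being induced by the differentials and the middle map
being Yoneda composition with `[T] ∈ Extⁿ(Y^{n+1},Y⁰)` (with `Ext⁰ = Hom`). -/
theorem four_term_exactness_of_nZ_cluster_tilting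
    {C : Type u} [Category.{v} C] [Abelian C] [HasExt.{w} C]
    (n : ℕ) (hn : 1 ≤ n) (M : Set C) (hM : IsNZClusterTilting n M)
    (X : C) (hX : X ∈ M)
    (T : ExactExtension C n) (hT : ∀ i ≤ n + 1, T.Y i ∈ M) :
    ∀ k : ℕ,
      Function.Exact
        (fun e : Ext X (T.Y n) (k * n) => e.comp (Ext.mk₀ (T.d n)) (add_zero _))
        (fun e : Ext X (T.Y (n + 1)) (k * n) =>
          e.comp T.extClass (show k * n + n = (k + 1) * n by ring)) ∧
      Function.Exact
        (fun e : Ext X (T.Y (n + 1)) (k * n) =>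
          e.comp T.extClass (show k * n + n = (k + 1) * n by ring))
        (fun e : Ext X (T.Y 0) ((k + 1) * n) => e.comp (Ext.mk₀ (T.d 0)) (add_zero _)) := by
  intro k
  obtain ⟨m, rfl⟩ : ∃ m, n = m + 1 := ⟨n - 1, by omega⟩
  have hs : k * (m + 1) + (m + 1) = (k + 1) * (m + 1) := by ring
  have hv : ∀ i ≤ m + 2, ∀ b j, 1 ≤ j → j ≤ m → b + j = (k + 1) * (m + 1) →
      ∀ e : Ext X (T.Y i) b, e = 0 := by
    intro i hi b j h1 h2 hb e
    refine hM.2 X hX _ (hT i hi) b (by omega) ?_ e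
    intro hd
    have : (m + 1) ∣ j := (Nat.dvd_add_right hd).1 (hb ▸ Dvd.intro_left _ rfl)
    have := Nat.le_of_dvd (by omega) this
    omega
  have hd0 : T.d 0 = eqToHom T.hK0.symm ≫ T.ι 0 := by simp [← T.d0_eq]
  refine ⟨fun y => ⟨fun h => ?_, ?_⟩, fun y => ⟨fun h => ?_, ?_⟩⟩
  · dsimp only at h
    rw [comp_extClass_eq] at h
    have h' := congrArg (fun z => Ext.comp z (Ext.mk₀ (eqToHom T.hK0.symm)) (add_zero _)) h
    simp only [comp_eqToHom_cancel, Ext.zero_comp] at h'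
    set x := y.comp (Ext.mk₀ (eqToHom T.hKm.symm)) (add_zero _) with hx
    have h1 : x.comp (T.shortExact m).extClass rfl = 0 := by
      refine chain_inj T X ((k + 1) * (m + 1)) m
        (fun i h1 h2 b hb => hv i (by omega) b i h1 h2 hb) _ (by omega) _ ?_
      rw [Ext.comp_assoc _ _ _ rfl (by omega : 1 + m = m + 1) (by omega)]
      exact h'
    obtain ⟨z, hz⟩ := Ext.covariant_sequence_exact₃ X (T.shortExact m) x rfl h1
    refine ⟨z, ?_⟩
    dsimp only at hz ⊢
    rw [T.dlast_eq, ← Ext.mk₀_comp_mk₀, ← Ext.comp_assoc_of_third_deg_zero, hz, hx,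
      comp_eqToHom_cancel]
  · rintro ⟨z, rfl⟩
    dsimp only
    rw [comp_extClass_eq, T.dlast_eq, ← Ext.mk₀_comp_mk₀, ← Ext.comp_assoc_of_third_deg_zero,
      comp_eqToHom_cancel, Ext.comp_assoc_of_second_deg_zero, π_comp_chain]
    simp
  · dsimp only at h
    rw [hd0, ← Ext.mk₀_comp_mk₀, ← Ext.comp_assoc_of_third_deg_zero] at h
    obtain ⟨e, he⟩ := chain_lift T X ((k + 1) * (m + 1)) m
      (fun i h1 h2 b hb => hv (i + 1) (by omega) b i h1 h2 hb) _ h (k * (m + 1)) hs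
    refine ⟨e.comp (Ext.mk₀ (eqToHom T.hKm)) (add_zero _), ?_⟩
    dsimp only
    rw [comp_extClass_eq, comp_eqToHom_cancel, he, comp_eqToHom_cancel]
  · rintro ⟨z, rfl⟩
    dsimp only
    rw [comp_extClass_eq, hd0, ← Ext.mk₀_comp_mk₀, ← Ext.comp_assoc_of_third_deg_zero,
      comp_eqToHom_cancel, Ext.comp_assoc_of_third_deg_zero, chain_comp_ι]
    simp

end NZPaper
end
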